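/- Let n ≥ 1 and let i ∈ {1, …, n+1}. The pushforward of σ_n under the coordinate map x ↦ x_i from S^n to [-1,1] equals the measure ν_n on ℝ with density t ↦ c_n · 1_{[-1,1]}(t) · (1 − t²)^{n/2 − 1} with respect to Lebesgue measure, where c_n = Γ((n+1)/2)/(√π · Γ(n/2)) is the constant making ν_n a probability measure. -/

import Mathlib

open MeasureTheory Metric
open scoped ENNReal

/-- The rotation-invariant (Haar) probability measure on the unit sphere
`S^n ⊂ ℝ^{n+1}`: the surface measure `volume.toSphere`, normalized to total mass `1`. -/
noncomputable def sphereHaar (n : ℕ) :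
    Measure (sphere (0 : EuclideanSpace ℝ (Fin (n + 1))) 1) :=
  ((volume : Measure (EuclideanSpace ℝ (Fin (n + 1)))).toSphere Set.univ)⁻¹ •
    (volume : Measure (EuclideanSpace ℝ (Fin (n + 1)))).toSphere

/-- The measure `ν_n` on `ℝ` with density
`t ↦ c_n · 1_{[-1,1]}(t) · (1 − t²)^{n/2 − 1}` with respect to Lebesgue measure,
where `c_n = Γ((n+1)/2)/(√π · Γ(n/2))`. -/
noncomputable def nuMeasure (n : ℕ) : Measure ℝ :=
  volume.withDensity fun t => ENNReal.ofReal
    ((Real.Gamma (((n : ℝ) + 1) / 2) / (Real.sqrt Real.pi * Real.Gamma ((n : ℝ) / 2))) *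
      Set.indicator (Set.Icc (-1 : ℝ) 1) (fun s => (1 - s ^ 2) ^ ((n : ℝ) / 2 - 1)) t)

/-!
Let `v` be a unit vector of a Euclidean space `E`. Polar coordinates in `vᗮ`, followed by planar
polar coordinates in the half plane spanned by `v` and a unit vector `w ⟂ v`, write a point of `E`
as `r • (cos θ • v + sin θ • w)`, with volume element `r ^ n * sin θ ^ (n - 1) dr dθ dw` when `dim
E = n + 1`. Comparison with polar coordinates in `E` gives the surface measure of the sphere in
terms of the polar angle `θ` and of `w`. As `⟪v, x⟫ = cos θ`, the substitution `s = cos θ` turns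
`sin θ ^ (n - 1) dθ` into the density `(1 - s ^ 2) ^ (n / 2 - 1)`, and the normalization is the
ratio of the areas of the unit spheres of `vᗮ` and `E`.
-/

section PolarCoordinates

open Module Real Set

variable {E : Type*} [NormedAddCommGroup E] [NormedSpace ℝ E] [FiniteDimensional ℝ E]
  [Nontrivial E] [MeasurableSpace E] [BorelSpace E] (μ : Measure E) [μ.IsAddHaarMeasure]

lemma lintegral_volumeIoiPow (k : ℕ) {f : ℝ → ℝ≥0∞} (hf : Measurable f) :
    ∫⁻ r, f r ∂Measure.volumeIoiPow k = ∫⁻ r in Ioi (0 : ℝ), ENNReal.ofReal (r ^ k) * f r := by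
  rw [Measure.volumeIoiPow, lintegral_withDensity_eq_lintegral_mul _ (by fun_prop) (by fun_prop)]
  exact lintegral_subtype_comap measurableSet_Ioi fun r : ℝ ↦ ENNReal.ofReal (r ^ k) * f r

lemma lintegral_Ioi_pow_mul_indicator_Iio_one (k : ℕ) :
    ∫⁻ r in Ioi (0 : ℝ), ENNReal.ofReal (r ^ k) * (Iio 1).indicator 1 r =
      ENNReal.ofReal (1 / (k + 1)) := by
  have hIio := Measure.volumeIoiPow_apply_Iio k ⟨1, mem_Ioi.2 one_pos⟩
  rw [one_pow] at hIio
  rw [← lintegral_volumeIoiPow k (measurable_one.indicator measurableSet_Iio), ← hIio,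
    ← lintegral_indicator_one measurableSet_Iio]
  rfl

lemma lintegral_eq_lintegral_toSphere_lintegral_smul {f : E → ℝ≥0∞} (hf : Measurable f) :
    ∫⁻ x, f x ∂μ = ∫⁻ u, (∫⁻ r in Ioi (0 : ℝ),
      ENNReal.ofReal (r ^ (finrank ℝ E - 1)) * f (r • (u : E))) ∂μ.toSphere := calc
  ∫⁻ x, f x ∂μ = ∫⁻ x : ({0}ᶜ : Set E), f x ∂μ.comap (↑) := by
    rw [lintegral_subtype_comap (measurableSet_singleton (0 : E)).compl, restrict_compl_singleton]
  _ = ∫⁻ p, f ((p.2 : ℝ) • (p.1 : E))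
      ∂μ.toSphere.prod (Measure.volumeIoiPow (finrank ℝ E - 1)) := by
    rw [← μ.measurePreserving_homeomorphUnitSphereProd.lintegral_comp_emb
      (Homeomorph.measurableEmbedding _)]
    refine lintegral_congr fun x ↦ ?_
    simp [smul_inv_smul₀ (norm_ne_zero_iff.2 x.2)]
  _ = _ := by
    rw [lintegral_prod _ (by fun_prop)]
    exact lintegral_congr fun u ↦
      lintegral_volumeIoiPow _ (f := fun r ↦ f (r • (u : E))) (by fun_prop)

lemma lintegral_comp_normalize_mul_comp_norm {f : E → ℝ≥0∞} (hf : Measurable f) {h : ℝ → ℝ≥0∞}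
    (hh : Measurable h) :
    ∫⁻ x, f (‖x‖⁻¹ • x) * h ‖x‖ ∂μ = (∫⁻ u, f u ∂μ.toSphere) *
      ∫⁻ r in Ioi (0 : ℝ), ENNReal.ofReal (r ^ (finrank ℝ E - 1)) * h r := by
  rw [lintegral_eq_lintegral_toSphere_lintegral_smul μ (by fun_prop),
    ← lintegral_mul_const _ (by fun_prop)]
  refine lintegral_congr fun u ↦ ?_
  rw [← lintegral_const_mul _ (by fun_prop)]
  refine setLIntegral_congr_fun measurableSet_Ioi fun r (hr : 0 < r) ↦ ?_
  have hu : ‖(u : E)‖ = 1 := norm_eq_of_mem_sphere u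
  have hnorm : ‖r • (u : E)‖ = r := by rw [norm_smul_of_nonneg hr.le, hu, mul_one]
  rw [hnorm, inv_smul_smul₀ hr.ne', mul_left_comm]

lemma lintegral_upperHalfPlane_eq_polar {f : ℝ × ℝ → ℝ≥0∞} (hf : Measurable f) :
    ∫⁻ s, ∫⁻ t in Ioi (0 : ℝ), f (s, t) =
      ∫⁻ r in Ioi (0 : ℝ), ∫⁻ θ in Ioo 0 π,
        ENNReal.ofReal r * f (r * cos θ, r * sin θ) := by
  have hsin {θ : ℝ} (hθ : θ ∈ Ioo (-π) π) : 0 < sin θ ↔ θ ∈ Ioo 0 π := by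
    refine ⟨fun h ↦ ⟨?_, hθ.2⟩, sin_pos_of_mem_Ioo⟩
    contrapose! h
    exact sin_nonpos_of_nonpos_of_neg_pi_le h hθ.1.le
  set H : Set (ℝ × ℝ) := univ ×ˢ Ioi 0
  have hH : MeasurableSet H := MeasurableSet.univ.prod measurableSet_Ioi
  calc ∫⁻ s, ∫⁻ t in Ioi (0 : ℝ), f (s, t) = ∫⁻ p, H.indicator f p := by
        rw [lintegral_indicator hH, Measure.volume_eq_prod, ← Measure.prod_restrict,
          lintegral_prod _ hf.aemeasurable, Measure.restrict_univ]
    _ = ∫⁻ r in Ioi (0 : ℝ), ∫⁻ θ in Ioo (-π) π,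
          ENNReal.ofReal r * H.indicator f (r * cos θ, r * sin θ) := by
        rw [← lintegral_comp_polarCoord_symm, polarCoord_target, Measure.volume_eq_prod,
          ← Measure.prod_restrict,
          lintegral_prod _ (by simp only [polarCoord_symm_apply, smul_eq_mul]; fun_prop)]
        simp
    _ = ∫⁻ r in Ioi (0 : ℝ), ∫⁻ θ in Ioo (-π) π, (Ioo 0 π).indicator
          (fun θ ↦ ENNReal.ofReal r * f (r * cos θ, r * sin θ)) θ := by
        refine setLIntegral_congr_fun measurableSet_Ioi fun r (hr : 0 < r) ↦
          setLIntegral_congr_fun measurableSet_Ioo fun θ hθ ↦ ?_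
        simp [H, indicator, hr, hsin hθ]
    _ = _ := by
        simp_rw [setLIntegral_indicator measurableSet_Ioo]
        rw [inter_eq_left.2 (Ioo_subset_Ioo_left (by simp [pi_nonneg]))]

lemma lintegral_sin_pow_mul_comp_cos (m : ℕ) (g : ℝ → ℝ≥0∞) :
    ∫⁻ θ in Ioo 0 π, ENNReal.ofReal (sin θ ^ m) * g (cos θ) =
      ∫⁻ s in Ioo (-1 : ℝ) 1, ENNReal.ofReal ((1 - s ^ 2) ^ (((m : ℝ) - 1) / 2)) * g s := by
  have himage : cos '' Ioo 0 π = Ioo (-1) 1 :=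
    cosPartialHomeomorph.image_source_eq_target
  rw [← himage, lintegral_image_eq_lintegral_abs_deriv_mul measurableSet_Ioo
    (fun θ _ ↦ (hasDerivAt_cos θ).hasDerivWithinAt)
    (injOn_cos.mono Ioo_subset_Icc_self)]
  refine setLIntegral_congr_fun measurableSet_Ioo fun θ hθ ↦ ?_
  have hsin : 0 < sin θ := sin_pos_of_mem_Ioo hθ
  have hpow : sin θ * (1 - cos θ ^ 2) ^ (((m : ℝ) - 1) / 2) = sin θ ^ m := by
    rw [← sin_sq, ← rpow_natCast _ 2, ← rpow_mul hsin.le, Nat.cast_ofNat,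
      mul_div_cancel₀ _ two_ne_zero, mul_comm, ← rpow_add_one hsin.ne', sub_add_cancel,
      rpow_natCast]
  rw [abs_neg, abs_of_pos hsin, ← mul_assoc, ← ENNReal.ofReal_mul hsin.le, hpow]

end PolarCoordinates

section Latitude

open Module Real Set Submodule

variable {E : Type*} [NormedAddCommGroup E] [InnerProductSpace ℝ E] {v : E}

lemma norm_cos_smul_add_sin_smul {w : E} (hv : ‖v‖ = 1) (hw : ‖w‖ = 1) (hvw : inner ℝ v w = 0)
    (θ : ℝ) : ‖cos θ • v + sin θ • w‖ = 1 := by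
  rw [← sq_eq_sq₀ (norm_nonneg _) zero_le_one, norm_add_sq_real]
  simp [norm_smul, inner_smul_left, inner_smul_right, hv, hw, hvw]

variable [FiniteDimensional ℝ E] [MeasurableSpace E] [BorelSpace E]

lemma measurePreserving_smul_add_orthogonal (hv : ‖v‖ = 1) :
    MeasurePreserving fun p : ℝ × (ℝ ∙ v)ᗮ ↦ p.1 • v + (p.2 : E) :=
  let e : WithLp 2 (ℝ × (ℝ ∙ v)ᗮ) ≃ₗᵢ[ℝ] E :=
    (LinearIsometryEquiv.withLpProdCongr 2 (LinearIsometryEquiv.toSpanUnitSingleton v hv)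
      (.refl ℝ _)).trans (ℝ ∙ v).orthogonalDecomposition.symm
  e.measurePreserving.comp (WithLp.volume_preserving_toLp ℝ (ℝ ∙ v)ᗮ)

lemma lintegral_eq_lintegral_latitude {m : ℕ} (hE : finrank ℝ E = m + 2) (hv : ‖v‖ = 1)
    {f : E → ℝ≥0∞} (hf : Measurable f) :
    ∫⁻ x, f x = ∫⁻ w : sphere (0 : (ℝ ∙ v)ᗮ) 1, (∫⁻ r in Ioi (0 : ℝ), ∫⁻ θ in Ioo 0 π,
      ENNReal.ofReal r * (ENNReal.ofReal ((r * sin θ) ^ m) *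
        f (r • (cos θ • v + sin θ • (w : E))))) ∂Measure.toSphere volume := by
  have : Fact (finrank ℝ E = m + 1 + 1) := ⟨hE⟩
  have hdim : finrank ℝ (ℝ ∙ v)ᗮ = m + 1 :=
    finrank_orthogonal_span_singleton (norm_ne_zero_iff.1 (by simp [hv]))
  have : Nontrivial (ℝ ∙ v)ᗮ := nontrivial_of_finrank_pos (R := ℝ) (by lia)
  calc ∫⁻ x, f x = ∫⁻ t : ℝ, ∫⁻ y : (ℝ ∙ v)ᗮ, f (t • v + (y : E)) := by
        rw [← (measurePreserving_smul_add_orthogonal hv).lintegral_comp hf,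
          Measure.volume_eq_prod, lintegral_prod _ (by fun_prop)]
    _ = ∫⁻ t : ℝ, ∫⁻ w : sphere (0 : (ℝ ∙ v)ᗮ) 1, (∫⁻ ρ in Ioi (0 : ℝ),
          ENNReal.ofReal (ρ ^ m) * f (t • v + ρ • (w : E))) ∂Measure.toSphere volume := by
        refine lintegral_congr fun t ↦ ?_
        rw [lintegral_eq_lintegral_toSphere_lintegral_smul volume (by fun_prop), hdim]
        simp
    _ = ∫⁻ w : sphere (0 : (ℝ ∙ v)ᗮ) 1, (∫⁻ t : ℝ, ∫⁻ ρ in Ioi (0 : ℝ),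
          ENNReal.ofReal (ρ ^ m) * f (t • v + ρ • (w : E))) ∂Measure.toSphere volume := by
        exact lintegral_lintegral_swap (by fun_prop)
    _ = _ := by
        refine lintegral_congr fun w ↦ ?_
        rw [lintegral_upperHalfPlane_eq_polar
          (f := fun p ↦ ENNReal.ofReal (p.2 ^ m) * f (p.1 • v + p.2 • (w : E))) (by fun_prop)]
        simp only [smul_add, smul_smul]

lemma lintegral_comp_normalize_mul_comp_norm_latitude {m : ℕ} (hE : finrank ℝ E = m + 2)
    (hv : ‖v‖ = 1) {f : E → ℝ≥0∞} (hf : Measurable f) {h : ℝ → ℝ≥0∞} (hh : Measurable h) :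
    ∫⁻ x, f (‖x‖⁻¹ • x) * h ‖x‖ = (∫⁻ w : sphere (0 : (ℝ ∙ v)ᗮ) 1, (∫⁻ θ in Ioo 0 π,
        ENNReal.ofReal (sin θ ^ m) * f (cos θ • v + sin θ • (w : E)))
          ∂Measure.toSphere volume) *
      ∫⁻ r in Ioi (0 : ℝ), ENNReal.ofReal (r ^ (m + 1)) * h r := by
  rw [lintegral_eq_lintegral_latitude hE hv (by fun_prop), ← lintegral_mul_const _ (by fun_prop)]
  refine lintegral_congr fun w ↦ ?_
  rw [← lintegral_const_mul _ (by fun_prop)]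
  refine setLIntegral_congr_fun measurableSet_Ioi fun r (hr : 0 < r) ↦ ?_
  rw [← lintegral_mul_const _ (by fun_prop)]
  refine setLIntegral_congr_fun measurableSet_Ioo fun θ _ ↦ ?_
  set x : E := cos θ • v + sin θ • (w : E)
  have hx : ‖x‖ = 1 := norm_cos_smul_add_sin_smul hv
    (norm_eq_of_mem_sphere w) (mem_orthogonal_singleton_iff_inner_right.1 w.1.2) θ
  have hnorm : ‖r • x‖ = r := by rw [norm_smul_of_nonneg hr.le, hx, mul_one]
  rw [hnorm, inv_smul_smul₀ hr.ne', mul_pow, ENNReal.ofReal_mul (by positivity), pow_succ,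
    ENNReal.ofReal_mul (by positivity)]
  ring

lemma lintegral_toSphere_eq_lintegral_latitude {m : ℕ} (hE : finrank ℝ E = m + 2) (hv : ‖v‖ = 1)
    {f : E → ℝ≥0∞} (hf : Measurable f) :
    ∫⁻ u : sphere (0 : E) 1, f u ∂Measure.toSphere volume =
      ∫⁻ w : sphere (0 : (ℝ ∙ v)ᗮ) 1, (∫⁻ θ in Ioo 0 π,
        ENNReal.ofReal (sin θ ^ m) * f (cos θ • v + sin θ • (w : E)))
          ∂Measure.toSphere volume := by
  have : Nontrivial E := nontrivial_of_finrank_pos (R := ℝ) (by lia)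
  have hmeas : Measurable ((Iio 1).indicator 1 : ℝ → ℝ≥0∞) :=
    measurable_one.indicator measurableSet_Iio
  -- Both formulas evaluate the integral of `f (x / ‖x‖)` over the unit ball, with the same finite
  -- positive radial factor.
  have hpolar := lintegral_comp_normalize_mul_comp_norm volume hf hmeas
  rw [lintegral_comp_normalize_mul_comp_norm_latitude hE hv hf hmeas, hE,
    show m + 2 - 1 = m + 1 from rfl, lintegral_Ioi_pow_mul_indicator_Iio_one] at hpolar
  have hpos : (0 : ℝ) < 1 / ((m + 1 : ℕ) + 1) := by positivity
  exact ((ENNReal.mul_left_inj (ENNReal.ofReal_pos.2 hpos).ne' ENNReal.ofReal_ne_top).1 hpolar).symm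

lemma map_inner_toSphere {m : ℕ} (hE : finrank ℝ E = m + 2) (hv : ‖v‖ = 1) :
    Measure.map (fun u : sphere (0 : E) 1 ↦ inner ℝ v (u : E)) (Measure.toSphere volume) =
      Measure.toSphere (volume : Measure (ℝ ∙ v)ᗮ) univ •
        (volume.restrict (Icc (-1) 1)).withDensity
          fun s ↦ ENNReal.ofReal ((1 - s ^ 2) ^ (((m : ℝ) - 1) / 2)) := by
  refine Measure.ext_of_lintegral _ fun g hg ↦ ?_
  have hinner (w : sphere (0 : (ℝ ∙ v)ᗮ) 1) (θ : ℝ) :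
      inner ℝ v (cos θ • v + sin θ • (w : E)) = cos θ := by
    simp [inner_add_right, inner_smul_right, hv, mem_orthogonal_singleton_iff_inner_right.1 w.1.2]
  rw [lintegral_map hg (by fun_prop),
    lintegral_toSphere_eq_lintegral_latitude hE hv (f := fun x ↦ g (inner ℝ v x)) (by fun_prop)]
  simp_rw [hinner]
  rw [lintegral_const, lintegral_sin_pow_mul_comp_cos, lintegral_smul_measure,
    lintegral_withDensity_eq_lintegral_mul _ (by fun_prop) hg,
    Measure.restrict_congr_set Ioo_ae_eq_Icc, smul_eq_mul, mul_comm]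
  rfl

lemma toSphere_volume_univ [Nontrivial E] :
    Measure.toSphere (volume : Measure E) univ = ENNReal.ofReal
      (2 * √π ^ finrank ℝ E / Gamma ((finrank ℝ E : ℝ) / 2)) := by
  have hd : (0 : ℝ) < finrank ℝ E := mod_cast finrank_pos
  rw [Measure.toSphere_apply_univ, InnerProductSpace.volume_ball, ENNReal.ofReal_one, one_pow,
    one_mul, ← ENNReal.ofReal_natCast, ← ENNReal.ofReal_mul hd.le,
    Gamma_add_one (by positivity)]
  congr 1
  field_simp

lemma inv_toSphere_univ_mul_toSphere_univ {F : Type*} [NormedAddCommGroup F]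
    [InnerProductSpace ℝ F] [FiniteDimensional ℝ F] [MeasurableSpace F] [BorelSpace F] {n : ℕ}
    (hn : 1 ≤ n) (hE : finrank ℝ E = n + 1) (hF : finrank ℝ F = n) :
    (Measure.toSphere (volume : Measure E) univ)⁻¹ * Measure.toSphere (volume : Measure F) univ =
      ENNReal.ofReal (Gamma (((n : ℝ) + 1) / 2) / (√π * Gamma ((n : ℝ) / 2))) := by
  have : Nontrivial E := nontrivial_of_finrank_pos (R := ℝ) (by lia)
  have : Nontrivial F := nontrivial_of_finrank_pos (R := ℝ) (by lia)
  have : 0 < Gamma (((n : ℝ) + 1) / 2) := Gamma_pos_of_pos (by positivity)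
  rw [toSphere_volume_univ, toSphere_volume_univ, hE, hF, Nat.cast_succ,
    ← ENNReal.ofReal_inv_of_pos (by positivity), ← ENNReal.ofReal_mul (by positivity), pow_succ]
  congr 1
  field_simp

end Latitude

open Real Set in
lemma nuMeasure_eq_smul_withDensity (n : ℕ) :
    nuMeasure n =
      ENNReal.ofReal (Gamma ((n + 1) / 2) / (√π * Gamma (n / 2))) •
        (volume.restrict (Icc (-1) 1)).withDensity
          fun s : ℝ ↦ ENNReal.ofReal ((1 - s ^ 2) ^ ((n : ℝ) / 2 - 1)) := by
  have hc : 0 ≤ Gamma ((n + 1) / 2) / (√π * Gamma (n / 2)) :=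
    div_nonneg (Gamma_nonneg_of_nonneg (by positivity))
      (mul_nonneg (sqrt_nonneg _) (Gamma_nonneg_of_nonneg (by positivity)))
  have hg : Measurable fun s : ℝ ↦ ENNReal.ofReal ((1 - s ^ 2) ^ ((n : ℝ) / 2 - 1)) := by fun_prop
  rw [← withDensity_indicator measurableSet_Icc,
    ← withDensity_smul _ (hg.indicator measurableSet_Icc), nuMeasure]
  congr with t
  by_cases ht : t ∈ Icc (-1 : ℝ) 1 <;> simp [ht, ENNReal.ofReal_mul hc]

open Module Real Set Submodule in
theorem map_coord_sphereHaar_general {E : Type*} [NormedAddCommGroup E] [InnerProductSpace ℝ E]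
    [FiniteDimensional ℝ E] [MeasurableSpace E] [BorelSpace E] {n : ℕ} (hn : 1 ≤ n)
    (hE : finrank ℝ E = n + 1) {v : E} (hv : ‖v‖ = 1) :
    Measure.map (fun u : sphere (0 : E) 1 ↦ inner ℝ v (u : E))
      ((Measure.toSphere (volume : Measure E) univ)⁻¹ • Measure.toSphere volume) =
        nuMeasure n := by
  obtain ⟨m, rfl⟩ := Nat.exists_eq_add_of_le' hn
  have : Fact (finrank ℝ E = m + 1 + 1) := ⟨hE⟩
  have hdim : finrank ℝ (ℝ ∙ v)ᗮ = m + 1 :=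
    finrank_orthogonal_span_singleton (norm_ne_zero_iff.1 (by simp [hv]))
  have hexp : ((m : ℝ) - 1) / 2 = (m + 1 : ℕ) / 2 - 1 := by push_cast; ring
  rw [Measure.map_smul, map_inner_toSphere hE hv, smul_smul,
    inv_toSphere_univ_mul_toSphere_univ hn hE hdim, nuMeasure_eq_smul_withDensity, hexp]

/-- The pushforward of the normalized Haar measure `σ_n` on `S^n` under the `i`-th
coordinate map is the measure `ν_n` on `[-1,1]` with density
`c_n (1 − t²)^{n/2 − 1}`, `c_n = Γ((n+1)/2)/(√π Γ(n/2))`. -/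
theorem map_coord_sphereHaar (n : ℕ) (hn : 1 ≤ n) (i : Fin (n + 1)) :
    Measure.map (fun x : sphere (0 : EuclideanSpace ℝ (Fin (n + 1))) 1 =>
        (x : EuclideanSpace ℝ (Fin (n + 1))) i) (sphereHaar n) = nuMeasure n := by
  simpa only [EuclideanSpace.inner_single_left, map_one, one_mul] using!
    map_coord_sphereHaar_general hn finrank_euclideanSpace_fin
      (v := EuclideanSpace.single i (1 : ℝ)) (by simp)
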